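/- For every s > 2, the function φ_s : [0,1) → ℝ defined by φ_s(x) = x ∫₀¹ dz / √(1 − z^{s−1} − x²(z² − z^{s−1})) is strictly increasing, real analytic on [0,1), satisfies φ_s(0) = 0, and maps [0,1) bijectively onto [0, π/2). -/

import Mathlib

/-!
Write `p = s - 1 > 1` and `D(x, z) = 1 - z^p - x² (z² - z^p)`.

Since `D = (1 - x²)(1 - z^p) + x² (1 - z²)` and both `1 - z^p` and `1 - z²` are at least `1 - z`,
for `x ∈ [0, 1]` the integrand is dominated by the integrable function `(1 - z)^(-1/2)`
(`one_sub_le_radicand`). Hence `φ_s` extends continuously to `[0, 1]` (`continuousOn_phiS`), with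
`φ_s(1) = ∫₀¹ dz / √(1 - z²) = π / 2` (`phiS_one`). It is strictly increasing on `[0, 1]` because
`(x / √D)² = 1 / ((1 - z^p) / x² - (z² - z^p))` increases strictly with `x` for each `z ∈ (0, 1)`
(`strictMonoOn_phiS`). The intermediate value theorem then gives the bijection onto `[0, π / 2)`.

For analyticity, factor `D = (1 - z^p)(1 - x² q(z))` with `q = (z² - z^p) / (1 - z^p)`. The
condition `p > 1` forces `|q| ≤ 1`, so `w ↦ ∫₀¹ (1 - z^p)^(-1/2) (1 - w² q(z))^(-1/2) dz` is
holomorphic on the whole open complex unit disc (`differentiableOn_cplxIntegral`) by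
differentiation under the integral sign; on real points it is the integral defining `φ_s`.
-/


open Real Set MeasureTheory

/-- The deviation-angle function `φ_s(x) = x ∫₀¹ dz / √(1 − z^(s−1) − x²(z² − z^(s−1)))`. -/
noncomputable def phiS (s x : ℝ) : ℝ :=
  x * ∫ z in (0:ℝ)..1, 1 / Real.sqrt (1 - z ^ (s - 1) - x ^ 2 * (z ^ 2 - z ^ (s - 1)))

namespace PhiS

/-- The radicand `1 - z^p - x² (z² - z^p)`, where `p` stands for `s - 1`. -/
noncomputable def radicand (p x z : ℝ) : ℝ := 1 - z ^ p - x ^ 2 * (z ^ 2 - z ^ p)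

/-- The ratio `q` in `radicand p x z = (1 - z^p) (1 - x² q)`; it takes the junk value `0` at
`z = 1`, where the radicand vanishes anyway. -/
noncomputable def ratio (p z : ℝ) : ℝ := (z ^ 2 - z ^ p) / (1 - z ^ p)

/-- The holomorphic extension of `x ↦ ∫₀¹ dz / √(radicand p x z)` to the unit disc. -/
noncomputable def cplxIntegral (p : ℝ) (w : ℂ) : ℂ :=
  ∫ z in (0:ℝ)..1, ((1 / √(1 - z ^ p) : ℝ) : ℂ) *
    (1 - w ^ 2 * (ratio p z : ℂ)) ^ ((-1 / 2 : ℝ) : ℂ)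

variable {p : ℝ}

lemma phiS_eq (s x : ℝ) :
    phiS s x = x * ∫ z in (0:ℝ)..1, 1 / √(radicand (s - 1) x z) := rfl

lemma rpow_le_self (hp : 1 < p) {z : ℝ} (hz : z ∈ Icc (0:ℝ) 1) : z ^ p ≤ z := by
  simpa using Real.rpow_le_rpow_of_exponent_ge_of_imp hz.1 hz.2 hp.le
    (fun _ h => absurd h (by linarith))

lemma one_sub_le_radicand (hp : 1 < p) {x z : ℝ} (hx : x ∈ Icc (0:ℝ) 1) (hz : z ∈ Icc (0:ℝ) 1) :
    1 - z ≤ radicand p x z := by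
  have h1 := rpow_le_self hp hz
  have h2 : x ^ 2 ≤ 1 := by nlinarith [hx.1, hx.2]
  have h3 : z ^ 2 ≤ z := by nlinarith [hz.1, hz.2]
  unfold radicand
  nlinarith [mul_nonneg (sub_nonneg.2 h2) (sub_nonneg.2 h1),
    mul_nonneg (sq_nonneg x) (sub_nonneg.2 h3)]

lemma radicand_pos (hp : 1 < p) {x z : ℝ} (hx : x ∈ Icc (0:ℝ) 1) (hz : z ∈ Ioo (0:ℝ) 1) :
    0 < radicand p x z := by
  linarith [one_sub_le_radicand hp hx (Ioo_subset_Icc_self hz), hz.2]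

lemma intervalIntegrable_bound :
    IntervalIntegrable (fun z : ℝ => (1 - z) ^ (-1 / 2 : ℝ)) volume 0 1 := by
  have h := (intervalIntegral.intervalIntegrable_rpow' (a := 0) (b := 1)
    (r := (-1 / 2 : ℝ)) (by norm_num)).comp_sub_left 1
  simpa using h.symm

lemma rpow_neg_half (y : ℝ) (hy : 0 ≤ y) : y ^ (-1 / 2 : ℝ) = 1 / √y := by
  rw [Real.sqrt_eq_rpow, neg_div, Real.rpow_neg hy, one_div, one_div]

/-- At `z = 1` the radicand vanishes and both sides take the junk value `0`. -/
lemma integrand_le (hp : 1 < p) {x z : ℝ} (hx : x ∈ Icc (0:ℝ) 1) (hz : z ∈ Icc (0:ℝ) 1) :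
    1 / √(radicand p x z) ≤ (1 - z) ^ (-1 / 2 : ℝ) := by
  have h := one_sub_le_radicand hp hx hz
  rcases hz.2.eq_or_lt with rfl | h1
  · simp [radicand]
  · rw [← rpow_neg_half _ (by linarith)]
    exact Real.rpow_le_rpow_of_nonpos (by linarith) h (by norm_num)

lemma measurable_integrand (p x : ℝ) : Measurable fun z => 1 / √(radicand p x z) := by
  unfold radicand
  fun_prop

lemma intervalIntegrable_integrand (hp : 1 < p) {x : ℝ} (hx : x ∈ Icc (0:ℝ) 1) :
    IntervalIntegrable (fun z => 1 / √(radicand p x z)) volume 0 1 := by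
  refine intervalIntegrable_bound.mono_fun' (measurable_integrand p x).aestronglyMeasurable ?_
  filter_upwards [ae_restrict_mem measurableSet_uIoc] with z hz
  rw [uIoc_of_le zero_le_one] at hz
  rw [Real.norm_of_nonneg (by positivity)]
  exact integrand_le hp hx (Ioc_subset_Icc_self hz)

lemma strictMonoOn_phiS {s : ℝ} (hs : 2 < s) : StrictMonoOn (phiS s) (Icc 0 1) := by
  have hp : 1 < s - 1 := by linarith
  intro x hx y hy hxy
  have hix := (intervalIntegrable_integrand hp hx).const_mul x
  have hiy := (intervalIntegrable_integrand hp hy).const_mul y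
  rw [phiS_eq, phiS_eq, ← sub_pos, ← intervalIntegral.integral_const_mul,
    ← intervalIntegral.integral_const_mul, ← intervalIntegral.integral_sub hiy hix]
  refine intervalIntegral.intervalIntegral_pos_of_pos_on (hiy.sub hix) (fun z hz => ?_) one_pos
  have hDx := radicand_pos hp hx hz
  have hDy := radicand_pos hp hy hz
  have hz' : z ^ (s - 1) < 1 := Real.rpow_lt_one hz.1.le hz.2 (by linarith)
  rw [sub_pos, mul_one_div, mul_one_div, div_lt_div_iff₀ (by positivity) (by positivity)]
  -- After squaring, the terms `x² y² (z² - z^p)` cancel, leaving `x² (1 - z^p) < y² (1 - z^p)`.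
  refine lt_of_pow_lt_pow_left₀ 2 (mul_nonneg hy.1 (by positivity)) ?_
  rw [mul_pow, mul_pow, Real.sq_sqrt hDx.le, Real.sq_sqrt hDy.le]
  have hsq : x ^ 2 < y ^ 2 := pow_lt_pow_left₀ hxy hx.1 two_ne_zero
  unfold radicand
  nlinarith [mul_pos (sub_pos.2 hsq) (sub_pos.2 hz')]

lemma continuousOn_phiS {s : ℝ} (hs : 2 < s) : ContinuousOn (phiS s) (Icc 0 1) := by
  have hp : 1 < s - 1 := by linarith
  refine continuousOn_id.mul fun x hx => ?_
  refine intervalIntegral.continuousWithinAt_of_dominated_interval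
    (F := fun x z => 1 / √(radicand (s - 1) x z))
    (.of_forall fun y => (measurable_integrand _ y).aestronglyMeasurable) ?_
    intervalIntegrable_bound ?_
  · filter_upwards [self_mem_nhdsWithin] with y hy
    refine .of_forall fun z hz => ?_
    rw [uIoc_of_le zero_le_one] at hz
    rw [Real.norm_of_nonneg (by positivity)]
    exact integrand_le hp hy (Ioc_subset_Icc_self hz)
  · refine .of_forall fun z hz => ?_
    rw [uIoc_of_le zero_le_one] at hz
    rcases hz.2.eq_or_lt with rfl | h1
    -- At `z = 1` the integrand is `1 / √0 = 0` for every `x`.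
    · simpa [radicand] using continuousWithinAt_const
    · have hc : Continuous fun x => √(radicand (s - 1) x z) := by
        unfold radicand
        fun_prop
      exact (continuousAt_const.div hc.continuousAt
        (Real.sqrt_pos.2 (radicand_pos hp hx ⟨hz.1, h1⟩)).ne').continuousWithinAt

lemma phiS_one {s : ℝ} (hs : 2 < s) : phiS s 1 = π / 2 := by
  have h := intervalIntegrable_integrand (p := s - 1) (by linarith) (right_mem_Icc.2 zero_le_one)
  have hD : ∀ z, radicand (s - 1) 1 z = 1 - z ^ 2 := fun z => by unfold radicand; ring
  simp only [hD] at h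
  rw [phiS_eq, one_mul]
  simp only [hD]
  rw [intervalIntegral.integral_eq_sub_of_hasDerivAt_of_le zero_le_one
    Real.continuous_arcsin.continuousOn (fun z hz => Real.hasDerivAt_arcsin ?_ ?_) h]
  · simp
  · linarith [hz.1]
  · exact hz.2.ne

/-- The lower bound `-1 ≤ q` amounts to `2 z^p ≤ 1 + z²`, which follows from `z^p ≤ z`; this is
where `1 < p` matters. -/
lemma abs_ratio_le_one (hp : 1 < p) {z : ℝ} (hz : z ∈ Icc (0:ℝ) 1) : |ratio p z| ≤ 1 := by
  have h1 := rpow_le_self hp hz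
  have h2 : z ^ 2 ≤ 1 := by nlinarith [hz.1, hz.2]
  rw [ratio, abs_div, abs_of_nonneg (a := 1 - z ^ p) (by linarith [hz.2])]
  refine div_le_one_of_le₀ (abs_le.2 ⟨?_, ?_⟩) (by linarith [hz.2])
  · nlinarith [sq_nonneg (1 - z)]
  · linarith

lemma radicand_eq (hp : 1 < p) {x z : ℝ} (hz : z ∈ Icc (0:ℝ) 1) :
    radicand p x z = (1 - z ^ p) * (1 - x ^ 2 * ratio p z) := by
  unfold radicand ratio
  rcases hz.2.eq_or_lt with rfl | h1
  · simp
  · have : 1 - z ^ p ≠ 0 := by linarith [rpow_le_self hp hz]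
    field_simp

lemma norm_sq_mul_ratio_le (hp : 1 < p) {z : ℝ} (hz : z ∈ Icc (0:ℝ) 1) {w : ℂ} {r : ℝ}
    (hw : ‖w‖ ≤ r) : ‖w ^ 2 * (ratio p z : ℂ)‖ ≤ r ^ 2 := by
  rw [norm_mul, norm_pow, Complex.norm_real, Real.norm_eq_abs]
  have : ‖w‖ ^ 2 ≤ r ^ 2 := by gcongr
  calc _ ≤ ‖w‖ ^ 2 * 1 := by gcongr; exact abs_ratio_le_one hp hz
    _ ≤ r ^ 2 := by simpa

/-- The base of the complex power stays in the right half-plane, away from the branch cut,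
uniformly on smaller discs. -/
lemma one_sub_le_re (hp : 1 < p) {z : ℝ} (hz : z ∈ Icc (0:ℝ) 1) {w : ℂ} {r : ℝ}
    (hw : ‖w‖ ≤ r) : 1 - r ^ 2 ≤ (1 - w ^ 2 * (ratio p z : ℂ)).re := by
  rw [Complex.sub_re, Complex.one_re]
  linarith [Complex.re_le_norm (w ^ 2 * (ratio p z : ℂ)), norm_sq_mul_ratio_le hp hz hw]

lemma norm_cpow_le (hp : 1 < p) {z : ℝ} (hz : z ∈ Icc (0:ℝ) 1) {w : ℂ} {r : ℝ}
    (hr : r ^ 2 < 1) (hw : ‖w‖ ≤ r) {c : ℝ} (hc : c ≤ 0) :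
    ‖(1 - w ^ 2 * (ratio p z : ℂ)) ^ (c : ℂ)‖ ≤ (1 - r ^ 2) ^ c := by
  rw [Complex.norm_cpow_real]
  exact Real.rpow_le_rpow_of_nonpos (by linarith)
    ((one_sub_le_re hp hz hw).trans (Complex.re_le_norm _)) hc

lemma differentiableOn_cplxIntegral (hp : 1 < p) :
    DifferentiableOn ℂ (cplxIntegral p) (Metric.ball 0 1) := by
  intro w₀ hw₀
  rw [mem_ball_zero_iff] at hw₀
  obtain ⟨r, hr, hr1⟩ := exists_between hw₀
  have hr0 : 0 ≤ r := (norm_nonneg _).trans hr.le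
  have hr2 : r ^ 2 < 1 := by nlinarith
  have ha : IntervalIntegrable (fun z : ℝ => 1 / √(1 - z ^ p)) volume 0 1 := by
    simpa [radicand] using intervalIntegrable_integrand hp (left_mem_Icc.2 zero_le_one)
  have hq : Measurable (ratio p) := by unfold ratio; fun_prop
  have hm : ∀ (w : ℂ) (c : ℝ), Measurable fun z : ℝ =>
      ((1 / √(1 - z ^ p) : ℝ) : ℂ) * (1 - w ^ 2 * (ratio p z : ℂ)) ^ (c : ℂ) := by
    intro w c
    fun_prop
  -- Working on the ball of radius `r < 1` keeps `1 - w² q` at distance at least `1 - r²` from `0`.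
  have hball : Metric.ball (0:ℂ) r ∈ nhds w₀ :=
    Metric.isOpen_ball.mem_nhds (mem_ball_zero_iff.2 hr)
  refine (intervalIntegral.hasDerivAt_integral_of_dominated_loc_of_deriv_le
    (F' := fun w z => (((1 / √(1 - z ^ p) : ℝ) : ℂ) *
      (1 - w ^ 2 * (ratio p z : ℂ)) ^ ((-1 / 2 - 1 : ℝ) : ℂ)) * (w * (ratio p z : ℂ)))
    (bound := fun z => 1 / √(1 - z ^ p) * (1 - r ^ 2) ^ (-1 / 2 - 1 : ℝ))
    hball (.of_forall fun w => (hm w _).aestronglyMeasurable) ?_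
    ((hm w₀ _).mul (by fun_prop)).aestronglyMeasurable ?_ (ha.mul_const _)
    ?_).2.differentiableAt.differentiableWithinAt
  · refine (ha.mul_const ((1 - r ^ 2) ^ (-1 / 2 : ℝ))).mono_fun'
      (hm w₀ _).aestronglyMeasurable ?_
    filter_upwards [ae_restrict_mem measurableSet_uIoc] with z hz
    rw [uIoc_of_le zero_le_one] at hz
    rw [norm_mul, Complex.norm_real, Real.norm_of_nonneg (by positivity)]
    gcongr
    exact norm_cpow_le hp (Ioc_subset_Icc_self hz) hr2 hr.le (by norm_num)
  · refine .of_forall fun z hz w hw => ?_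
    rw [uIoc_of_le zero_le_one] at hz
    have hz' := Ioc_subset_Icc_self hz
    rw [mem_ball_zero_iff] at hw
    have h1 : ‖w * (ratio p z : ℂ)‖ ≤ 1 := by
      rw [norm_mul, Complex.norm_real, Real.norm_eq_abs]
      exact mul_le_one₀ (hw.trans hr1).le (abs_nonneg _) (abs_ratio_le_one hp hz')
    rw [norm_mul, norm_mul, Complex.norm_real, Real.norm_of_nonneg (by positivity)]
    refine (mul_le_of_le_one_right (by positivity) h1).trans ?_
    gcongr
    exact norm_cpow_le hp hz' hr2 hw.le (by norm_num)
  · refine .of_forall fun z hz w hw => ?_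
    rw [uIoc_of_le zero_le_one] at hz
    rw [mem_ball_zero_iff] at hw
    have hre := one_sub_le_re hp (Ioc_subset_Icc_self hz) hw.le
    have hd : HasDerivAt (fun w : ℂ => 1 - w ^ 2 * (ratio p z : ℂ))
        (-(2 * w * (ratio p z : ℂ))) w := by
      simpa using ((hasDerivAt_pow 2 w).mul_const (ratio p z : ℂ)).const_sub 1
    refine ((hd.cpow_const (c := ((-1 / 2 : ℝ) : ℂ))
      (Or.inl (by linarith))).const_mul ((1 / √(1 - z ^ p) : ℝ) : ℂ)).congr_deriv ?_
    push_cast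
    ring

lemma phiS_eq_re {s x : ℝ} (hs : 2 < s) (hx : |x| < 1) :
    phiS s x = x * (cplxIntegral (s - 1) x).re := by
  have hp : 1 < s - 1 := by linarith
  have h : cplxIntegral (s - 1) x =
      ∫ z in (0:ℝ)..1, ((1 / √(radicand (s - 1) x z) : ℝ) : ℂ) := by
    refine intervalIntegral.integral_congr fun z hz => ?_
    rw [uIcc_of_le zero_le_one] at hz
    have hre : 1 - |x| ^ 2 ≤ 1 - x ^ 2 * ratio (s - 1) z := by
      have := one_sub_le_re hp hz (w := x) (r := |x|) (by simp)
      rwa [← Complex.ofReal_pow, ← Complex.ofReal_mul, ← Complex.ofReal_one,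
        ← Complex.ofReal_sub, Complex.ofReal_re] at this
    have hpos : 0 ≤ 1 - x ^ 2 * ratio (s - 1) z := by nlinarith [abs_nonneg x]
    have hz1 := rpow_le_self hp hz
    rw [radicand_eq hp hz, Real.sqrt_mul (by linarith [hz.2]), ← one_div_mul_one_div,
      ← rpow_neg_half _ hpos, Complex.ofReal_mul, Complex.ofReal_cpow hpos]
    push_cast
    rfl
  rw [phiS_eq, h, intervalIntegral.integral_ofReal, Complex.ofReal_re]

lemma analyticOn_phiS {s : ℝ} (hs : 2 < s) : AnalyticOn ℝ (phiS s) (Ico 0 1) := by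
  intro x hx
  have hx1 : |x| < 1 := by rw [abs_of_nonneg hx.1]; exact hx.2
  have hG : AnalyticAt ℂ (cplxIntegral (s - 1)) x :=
    (differentiableOn_cplxIntegral (by linarith)).analyticAt
      (Metric.isOpen_ball.mem_nhds (by simpa using hx1))
  refine ((analyticAt_id.mul hG.re_ofReal).congr ?_).analyticWithinAt
  filter_upwards [(isOpen_lt continuous_abs continuous_const).mem_nhds hx1] with y hy
  exact (phiS_eq_re hs hy).symm

end PhiS

/-- For every `s > 2`, `φ_s` is strictly increasing on `[0,1)`, real analytic on `[0,1)`,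
satisfies `φ_s(0) = 0` and maps `[0,1)` bijectively onto `[0, π/2)`. -/
theorem stmt0 (s : ℝ) (hs : 2 < s) :
    StrictMonoOn (phiS s) (Ico 0 1) ∧
    AnalyticOn ℝ (phiS s) (Ico 0 1) ∧
    phiS s 0 = 0 ∧
    BijOn (phiS s) (Ico 0 1) (Ico 0 (π / 2)) := by
  have hmono := PhiS.strictMonoOn_phiS hs
  have hmono' := hmono.mono Ico_subset_Icc_self
  have h0 : phiS s 0 = 0 := by simp [phiS]
  have h1 := PhiS.phiS_one hs
  refine ⟨hmono', PhiS.analyticOn_phiS hs, h0, ?_, hmono'.injOn, ?_⟩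
  · intro x hx
    have hx' := Ico_subset_Icc_self hx
    rw [← h0, ← h1]
    exact ⟨hmono.monotoneOn (left_mem_Icc.2 zero_le_one) hx' hx.1,
      hmono hx' (right_mem_Icc.2 zero_le_one) hx.2⟩
  · have h := intermediate_value_Ico zero_le_one (PhiS.continuousOn_phiS hs)
    rwa [h0, h1] at h
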